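/- Let L be a language over a finite alphabet Σ and let a, b ∈ ℕ with a ≤ b. Assume every word of L has length at least a. Then the substring language {Ss(σ,a,b) : σ ∈ L} equals ((Su_a(L) / Su_b(L)) ∩ Σ^{b−a}) ∪ (Su_a(L) ∩ Σ^{<b−a}), where / denotes right quotient. -/

import Mathlib

/-- The substring of `σ` between positions `a` and `b`:
the letters of `σ` at positions `a` up to `min b |σ|` (exclusive). -/
def Ss {α : Type} (σ : List α) (a b : ℕ) : List α :=
  (σ.drop a).take (b - a)

/-- The position-`i` suffix language: `Su_i(L) = {y : ∃ x, |x| = i ∧ x·y ∈ L}`. -/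
def SuAt {α : Type} (L : Language α) (i : ℕ) : Set (List α) :=
  {y | ∃ x : List α, x.length = i ∧ x ++ y ∈ L}

/-- Right quotient: `L₁ / L₂ = {x : ∃ y ∈ L₂, x·y ∈ L₁}`. -/
def RQ {α : Type} (L₁ L₂ : Set (List α)) : Set (List α) :=
  {x | ∃ y ∈ L₂, x ++ y ∈ L₁}

/-!
Dropping the first `a` letters turns the substrings of `L` into the length `b - a` truncations of
the words of `Su_a(L)`. A truncation of length exactly `n` is what remains of a long word once its
position-`n` suffix is removed, which is a right quotient; a truncation of length less than `n` is
the whole word. Since `Su_{b-a}(Su_a(L)) = Su_b(L)`, these two cases are the two parts of the union.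
-/

section Suffix

variable {α : Type} {L : Language α}

theorem mem_suAt_iff {i : ℕ} {y : List α} :
    y ∈ SuAt L i ↔ ∃ σ ∈ L, i ≤ σ.length ∧ σ.drop i = y := by
  constructor
  · rintro ⟨x, rfl, hxy⟩
    exact ⟨x ++ y, hxy, by simp, List.drop_left⟩
  · rintro ⟨σ, hσ, hi, rfl⟩
    exact ⟨σ.take i, List.length_take_of_le hi, by rwa [List.take_append_drop]⟩

theorem suAt_suAt (L : Language α) (i j : ℕ) : SuAt (SuAt L i) j = SuAt L (i + j) := by
  ext z
  constructor
  · rintro ⟨y, rfl, x, rfl, hxyz⟩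
    exact ⟨x ++ y, List.length_append, by rwa [List.append_assoc]⟩
  · rintro ⟨x, hx, hxz⟩
    refine ⟨x.drop i, by rw [List.length_drop, hx, Nat.add_sub_cancel_left], x.take i,
      List.length_take_of_le (by omega), ?_⟩
    rwa [← List.append_assoc, List.take_append_drop]

theorem setOf_Ss_eq_image_take_suAt {a : ℕ} (hlen : ∀ σ ∈ L, a ≤ σ.length) (b : ℕ) :
    {w | ∃ σ ∈ L, w = Ss σ a b} = List.take (b - a) '' SuAt L a := by
  ext w
  constructor
  · rintro ⟨σ, hσ, rfl⟩
    exact ⟨σ.drop a, mem_suAt_iff.2 ⟨σ, hσ, hlen σ hσ, rfl⟩, rfl⟩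
  · rintro ⟨y, hy, rfl⟩
    obtain ⟨σ, hσ, -, rfl⟩ := mem_suAt_iff.1 hy
    exact ⟨σ, hσ, rfl⟩

end Suffix

section Truncation

theorem image_take_inter_length_lt {α : Type*} (M : Set (List α)) (n : ℕ) :
    List.take n '' (M ∩ {σ | σ.length < n}) = M ∩ {w | w.length < n} := by
  have htake : Set.EqOn (List.take n) id (M ∩ {σ | σ.length < n}) :=
    fun _ hσ => List.take_of_length_le hσ.2.le
  rw [htake.image_eq, Set.image_id]

variable {α : Type} (M : Set (List α)) (n : ℕ)

theorem image_take_inter_length_ge :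
    List.take n '' (M ∩ {σ | n ≤ σ.length}) = RQ M (SuAt M n) ∩ {w | w.length = n} := by
  ext w
  constructor
  · rintro ⟨σ, ⟨hσ, hn⟩, rfl⟩
    have hsplit : σ.take n ++ σ.drop n ∈ M := by rwa [List.take_append_drop]
    have htake : (σ.take n).length = n := List.length_take_of_le hn
    exact ⟨⟨σ.drop n, ⟨σ.take n, htake, hsplit⟩, hsplit⟩, htake⟩
  · rintro ⟨⟨y, -, hwy⟩, rfl⟩
    exact ⟨w ++ y, ⟨hwy, by simp⟩, List.take_left⟩

theorem image_take_eq_rq_union :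
    List.take n '' M =
      (RQ M (SuAt M n) ∩ {w | w.length = n}) ∪ (M ∩ {w | w.length < n}) := by
  have hcover : {σ : List α | n ≤ σ.length} ∪ {σ | σ.length < n} = Set.univ :=
    Set.eq_univ_of_forall fun σ => le_or_gt n σ.length
  rw [← image_take_inter_length_ge, ← image_take_inter_length_lt, ← Set.image_union,
    ← Set.inter_union_distrib_left, hcover, Set.inter_univ]

end Truncation

theorem substring_language_eq_general {α : Type} (L : Language α) (a b : ℕ)
    (hab : a ≤ b) (hlen : ∀ σ ∈ L, a ≤ σ.length) :
    {w : List α | ∃ σ ∈ L, w = Ss σ a b} =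
      (RQ (SuAt L a) (SuAt L b) ∩ {w | w.length = b - a}) ∪
        (SuAt L a ∩ {w | w.length < b - a}) := by
  have hsuffix : SuAt (SuAt L a) (b - a) = SuAt L b := by
    rw [suAt_suAt, Nat.add_sub_cancel' hab]
  rw [setOf_Ss_eq_image_take_suAt hlen, image_take_eq_rq_union, hsuffix]

/-- If every word of `L` has length at least `a` and `a ≤ b`, then the substring
language `{Ss(σ,a,b) : σ ∈ L}` equals
`((Su_a(L) / Su_b(L)) ∩ Σ^{b-a}) ∪ (Su_a(L) ∩ Σ^{<b-a})`. -/
theorem substring_language_eq {α : Type} [Fintype α] (L : Language α) (a b : ℕ)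
    (hab : a ≤ b) (hlen : ∀ σ ∈ L, a ≤ σ.length) :
    {w : List α | ∃ σ ∈ L, w = Ss σ a b} =
      (RQ (SuAt L a) (SuAt L b) ∩ {w | w.length = b - a}) ∪
        (SuAt L a ∩ {w | w.length < b - a}) :=
  substring_language_eq_general L a b hab hlen
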